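/- arXiv:1307.1956 — 2 statements merged into one kernel-verified Lean document; each statement's English description precedes it below -/
import Mathlib

section
/- Let K be a henselian valued field with valuation ring O, maximal ideal m, residue field F. Let f ∈ O[X] be monic such that f̄ is square-free and has no zero in F, and suppose there is a ∈ O with f'(a) ∉ m. If F is PAC, or F is finite with |F| > (2·deg(f)−1)^4, then O = (f(K)⁻¹ − f(K)⁻¹) + (f(K)⁻¹·f(K)⁻¹ ∪ {0}), i.e., every element of O is of the form f(x)⁻¹ − f(y)⁻¹ + t with t = 0 or t = f(z)⁻¹f(w)⁻¹, and conversely all such elements lie in O. -/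
/-- A field `F` is pseudo-algebraically closed (PAC) if every absolutely irreducible
affine variety over `F` has an `F`-rational point. -/
def IsPAC (F : Type*) [Field F] : Prop :=
  ∀ (n : ℕ) (I : Ideal (MvPolynomial (Fin n) F)), I.IsPrime →
    (I.map (MvPolynomial.map (algebraMap F (AlgebraicClosure F)))).IsPrime →
    ∃ x : Fin n → F, ∀ g ∈ I, MvPolynomial.eval x g = 0

/-!
Since `f` has no zero modulo the maximal ideal, it takes unit values on `O`, and since it is monic,
`f(x) ∈ O` forces `x ∈ O`; hence `f(x)⁻¹ ∈ O` for every `x ∈ K`. Conversely, `b = f(x)` can be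
solved in `O` as soon as it can be solved in the residue field `F` at a point `ξ` with
`f'(ξ) ≠ 0`, so Hensel's lemma reduces the representation of `w ∈ O` to one over `F` whose first
term comes from such a `ξ`.

If `F` is PAC, the two difference terms may be taken equal: for `c ≠ 0` the curve
`f(Y) f(Z) = c` is absolutely irreducible, by Eisenstein's criterion at `Y - α` for a simple root
`α` of `f`, and a rational point on it represents `c⁻¹`. If `F` is finite with `q` elements, the
set `A` of inverses of noncritical values of `f` satisfies `q ≤ (2 deg f - 1) |A|`, hence
`q ^ 3 < |A| ^ 4`. Reading `w = a - b + c d` as the incidence of the point `(d, a)` with the line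
`y = -c x + (w + b)`, a variance estimate for the number of lines through a point yields a
solution in `A`.
-/

theorem natDegree_ne_zero_of_derivative_ne_zero {R : Type*} [Semiring R] {f : Polynomial R}
    (hf : f.derivative ≠ 0) : f.natDegree ≠ 0 :=
  fun h => hf (Polynomial.derivative_of_natDegree_zero h)

section IrreducibleCurve

open Polynomial

theorem irreducible_of_irreducible_reverse {R : Type*} [CommRing R] [IsDomain R] {f : R[X]}
    (h₀ : f.coeff 0 ≠ 0) (hf : Irreducible f.reverse) : Irreducible f := by
  have isUnit_of_reverse : ∀ {g : R[X]}, g.coeff 0 ≠ 0 → IsUnit g.reverse → IsUnit g := by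
    intro g hg hu
    have hdeg : g.natDegree = 0 := by
      rw [natDegree_eq_reverse_natDegree_add_natTrailingDegree, natDegree_eq_zero_of_isUnit hu,
        natTrailingDegree_eq_zero.2 (Or.inr hg)]
    rw [eq_C_of_natDegree_eq_zero hdeg] at hu ⊢
    rwa [reverse_C] at hu
  refine ⟨fun hu => hf.not_isUnit ?_, fun a b hab => ?_⟩
  · obtain ⟨r, -, rfl⟩ := isUnit_iff.1 hu
    rwa [reverse_C]
  · rw [hab, mul_coeff_zero] at h₀
    rw [hab, reverse_mul_of_domain] at hf
    exact (of_irreducible_mul hf).imp (isUnit_of_reverse (left_ne_zero_of_mul h₀))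
      (isUnit_of_reverse (right_ne_zero_of_mul h₀))

theorem irreducible_of_reverse_eisenstein {R : Type*} [CommRing R] [IsDomain R] {f : R[X]}
    {P : Ideal R} (hP : P.IsPrime) (h₀ : f.coeff 0 ∉ P) (hfP : ∀ n ≠ 0, f.coeff n ∈ P)
    (hdeg : 0 < f.natDegree) (hlead : f.leadingCoeff ∉ P ^ 2) (hprim : f.IsPrimitive) :
    Irreducible f := by
  have h₀' : f.coeff 0 ≠ 0 := fun h => h₀ (h ▸ P.zero_mem)
  have htrail : f.natTrailingDegree = 0 := natTrailingDegree_eq_zero.2 (Or.inr h₀')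
  have hrev : f.reverse.natDegree = f.natDegree := by rw [reverse_natDegree, htrail, tsub_zero]
  refine irreducible_of_irreducible_reverse h₀'
    (irreducible_of_eisenstein_criterion hP ?_ (fun n hn => ?_) ?_ ?_ fun r hr => hprim r ?_)
  · rwa [reverse_leadingCoeff, trailingCoeff, htrail]
  · have hn' : n < f.natDegree := hrev ▸ coe_lt_degree.1 hn
    rw [coeff_reverse, revAt_le hn'.le]
    exact hfP _ (by omega)
  · rwa [← natDegree_pos_iff_degree_pos, hrev]
  · rwa [coeff_zero_reverse]
  · rw [C_dvd_iff_dvd_coeff] at hr ⊢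
    intro n
    simpa [coeff_reverse] using hr (revAt f.natDegree n)

theorem irreducible_C_mul_sub_C {R : Type*} [CommRing R] [IsDomain R] {a p c : R} (hp : Prime p)
    (hpa : p ∣ a) (hpa₂ : ¬ p ^ 2 ∣ a) (hc : IsUnit c) {g : R[X]} (hg : 0 < g.natDegree)
    (hlead : IsUnit g.leadingCoeff) : Irreducible (C a * g - C c) := by
  have ha : a ≠ 0 := fun h => hpa₂ (h ▸ dvd_zero _)
  have hdeg : (C a * g - C c).natDegree = g.natDegree := by
    rw [natDegree_sub_C, natDegree_C_mul ha]
  have hleadCoeff : (C a * g - C c).leadingCoeff = a * g.leadingCoeff := by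
    rw [leadingCoeff, hdeg, coeff_sub, coeff_C_mul, coeff_C_of_ne_zero hg.ne', sub_zero,
      leadingCoeff]
  have hcoeff₀ : (C a * g - C c).coeff 0 = a * g.coeff 0 - c := by simp
  refine irreducible_of_reverse_eisenstein ((Ideal.span_singleton_prime hp.ne_zero).2 hp)
    ?_ (fun n hn => ?_) (hdeg ▸ hg) ?_ fun t ht => ?_
  · rw [hcoeff₀, Ideal.mem_span_singleton, dvd_sub_right (hpa.mul_right _)]
    exact fun h => hp.not_isUnit (isUnit_of_dvd_unit h hc)
  · rw [coeff_sub, coeff_C_mul, coeff_C_of_ne_zero hn, sub_zero, Ideal.mem_span_singleton]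
    exact hpa.mul_right _
  · rwa [hleadCoeff, Ideal.span_singleton_pow, Ideal.mem_span_singleton, hlead.dvd_mul_right]
  · rw [C_dvd_iff_dvd_coeff] at ht
    have hta : t ∣ a := hlead.dvd_mul_right.1 (hleadCoeff ▸ ht _)
    exact isUnit_of_dvd_unit ((dvd_sub_right (hta.mul_right _)).1 (hcoeff₀ ▸ ht 0)) hc

theorem isLocalHom_mvPolynomialMap {σ R S : Type*} [CommRing R] [CommRing S] {φ : R →+* S}
    [IsLocalHom φ] (hφ : Function.Injective φ) :
    IsLocalHom (MvPolynomial.map (σ := σ) φ) where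
  map_nonunit P hP := by
    rw [MvPolynomial.isUnit_iff] at hP ⊢
    simp only [MvPolynomial.coeff_map] at hP
    exact ⟨hP.1.of_map, fun i hi => (IsNilpotent.map_iff hφ).1 (hP.2 i hi)⟩

/-- The equation `f(Y) g(Z) = c` of an affine plane curve; the variables `Y` and `Z` are
`X 1` and `X 0`, so that `MvPolynomial.finSuccEquiv` singles out `Z`. -/
noncomputable def evalMulEvalCurve {k : Type*} [CommRing k] (f g : k[X]) (c : k) :
    MvPolynomial (Fin 2) k :=
  aeval (MvPolynomial.X 1) f * aeval (MvPolynomial.X 0) g - MvPolynomial.C c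

theorem eval_evalMulEvalCurve {k : Type*} [CommRing k] (f g : k[X]) (c : k) (x : Fin 2 → k) :
    MvPolynomial.eval x (evalMulEvalCurve f g c) = f.eval (x 1) * g.eval (x 0) - c := by
  have heval : ∀ (i : Fin 2) (h : k[X]),
      MvPolynomial.eval x (aeval (MvPolynomial.X i) h) = h.eval (x i) := fun i h => by
    simpa using (aeval_algHom_apply (MvPolynomial.aeval x) (MvPolynomial.X i) h).symm
  simp [evalMulEvalCurve, heval]

theorem map_evalMulEvalCurve {k l : Type*} [CommRing k] [CommRing l] (φ : k →+* l) (f g : k[X])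
    (c : k) :
    MvPolynomial.map φ (evalMulEvalCurve f g c) =
      evalMulEvalCurve (f.map φ) (g.map φ) (φ c) := by
  have hmap : ∀ (i : Fin 2) (h : k[X]), MvPolynomial.map φ (aeval (MvPolynomial.X i) h) =
      aeval (MvPolynomial.X i) (h.map φ) := fun i h => by
    simpa using map_aeval_eq_aeval_map (φ := φ) (ψ := MvPolynomial.map (σ := Fin 2) φ)
      (by ext; simp) h (MvPolynomial.X i)
  simp [evalMulEvalCurve, hmap]

theorem irreducible_evalMulEvalCurve {k : Type*} [Field k] {f g : k[X]} {c α : k}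
    (hf : f.rootMultiplicity α = 1) (hg : 0 < g.natDegree) (hc : c ≠ 0) :
    Irreducible (evalMulEvalCurve f g c) := by
  let E : MvPolynomial (Fin 2) k ≃ₐ[k] k[X][X] :=
    (MvPolynomial.finSuccEquiv k 1).trans (mapAlgEquiv (MvPolynomial.uniqueAlgEquiv k (Fin 1)))
  have hE₀ : E (MvPolynomial.X 0) = X := by simp [E, MvPolynomial.finSuccEquiv_X_zero]
  have hE₁ : E (MvPolynomial.X 1) = C X := by
    have : MvPolynomial.finSuccEquiv k 1 (MvPolynomial.X 1) = C (MvPolynomial.X 0) :=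
      MvPolynomial.finSuccEquiv_X_succ (j := (0 : Fin 1))
    simp [E, this]
  have hE : E (evalMulEvalCurve f g c) = C f * g.map C - C (C c) := by
    have hEf : aeval (C X : k[X][X]) f = C f := by
      simpa using aeval_algebraMap_apply k[X][X] (X : k[X]) f
    have hEg : aeval (X : k[X][X]) g = g.map C := aeval_X_left_eq_map g
    have hEc : E (MvPolynomial.C c) = C (C c) := E.commutes c
    rw [evalMulEvalCurve, map_sub, map_mul, ← aeval_algHom_apply, ← aeval_algHom_apply, hE₀, hE₁,
      hEf, hEg, hEc]
  have hf₀ : f ≠ 0 := by rintro rfl; simp at hf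
  have hroot : ∀ n, (X - C α) ^ n ∣ f ↔ n ≤ 1 := fun n => by
    rw [← le_rootMultiplicity_iff hf₀, hf]
  rw [← MulEquiv.irreducible_iff E, hE]
  refine irreducible_C_mul_sub_C (prime_X_sub_C α) ?_ ?_ (isUnit_C.2 hc.isUnit) ?_ ?_
  · simpa using hroot 1
  · simp [hroot]
  · rwa [natDegree_map]
  · rw [leadingCoeff_map]
    exact isUnit_C.2 (leadingCoeff_ne_zero.2 (ne_zero_of_natDegree_gt hg)).isUnit

theorem IsPAC.exists_eval_mul_eval_eq {F : Type*} [Field F] (hF : IsPAC F) {f g : F[X]} {c : F}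
    {α : AlgebraicClosure F}
    (hf : (f.map (algebraMap F (AlgebraicClosure F))).rootMultiplicity α = 1)
    (hg : 0 < g.natDegree) (hc : c ≠ 0) : ∃ y z, f.eval y * g.eval z = c := by
  have hgeom : Irreducible (MvPolynomial.map (algebraMap F (AlgebraicClosure F))
      (evalMulEvalCurve f g c)) := by
    rw [map_evalMulEvalCurve]
    exact irreducible_evalMulEvalCurve hf (by rwa [natDegree_map]) (by simpa using hc)
  have := isLocalHom_mvPolynomialMap (σ := Fin 2) (algebraMap F (AlgebraicClosure F)).injective
  have hirr : Irreducible (evalMulEvalCurve f g c) := hgeom.of_map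
  obtain ⟨x, hx⟩ := hF 2 (Ideal.span {evalMulEvalCurve f g c})
    ((Ideal.span_singleton_prime hirr.ne_zero).2 hirr.prime)
    (by
      rw [Ideal.map_span, Set.image_singleton]
      exact (Ideal.span_singleton_prime hgeom.ne_zero).2 hgeom.prime)
  have hpoint := hx _ (Ideal.mem_span_singleton_self _)
  rw [eval_evalMulEvalCurve] at hpoint
  exact ⟨x 1, x 0, sub_eq_zero.1 hpoint⟩

theorem exists_rootMultiplicity_eq_one {k : Type*} [Field k] [IsAlgClosed k] {f : k[X]}
    (hf : Squarefree f) (hdeg : f.natDegree ≠ 0) : ∃ α, f.rootMultiplicity α = 1 := by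
  obtain ⟨α, hα⟩ := IsAlgClosed.exists_root f (degree_ne_of_natDegree_ne hdeg)
  refine ⟨α, le_antisymm ?_ ((rootMultiplicity_pos hf.ne_zero).2 hα)⟩
  exact rootMultiplicity_le_one_of_separable (PerfectField.separable_iff_squarefree.2 hf) α

end IrreducibleCurve

section FiniteField

open Finset Polynomial
open scoped Pointwise

theorem sum_card_filter_mem {α ι : Type*} [Fintype α] [DecidableEq α] (s : Finset ι)
    (B : ι → Finset α) : ∑ a, #{i ∈ s | a ∈ B i} = ∑ i ∈ s, #(B i) := by
  simpa [bipartiteAbove, bipartiteBelow] using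
    sum_card_bipartiteAbove_eq_sum_card_bipartiteBelow (s := univ) (t := s) fun a i => a ∈ B i

section

variable {F : Type*} [Field F] [Fintype F] [DecidableEq F]

/-- The non-vertical line `y = m x + k` of the affine plane over `F`, encoded by the pair
`l = (m, k)`, as a finite set of points; incidences with such lines encode the equation
`w = a - b + c d`. -/
def affineLine (l : F × F) : Finset (F × F) := {p | p.2 = l.1 * p.1 + l.2}

theorem mem_affineLine {l p : F × F} : p ∈ affineLine l ↔ p.2 = l.1 * p.1 + l.2 := by
  simp [affineLine]

theorem card_affineLine (l : F × F) : #(affineLine l) = Fintype.card F := by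
  have : affineLine l = univ.image fun x => (x, l.1 * x + l.2) := by
    ext ⟨x, y⟩
    simp [mem_affineLine, eq_comm]
  rw [this, card_image_of_injective _ fun x y h => congrArg Prod.fst h, card_univ]

theorem card_affineLine_inter_le_one {l l' : F × F} (h : l ≠ l') :
    #(affineLine l ∩ affineLine l') ≤ 1 := by
  refine card_le_one.2 fun p hp p' hp' => ?_
  simp only [mem_inter, mem_affineLine] at hp hp'
  have hslope : l.1 ≠ l'.1 := fun h₁ =>
    h (Prod.ext h₁ (by linear_combination hp.2 - hp.1 - p.1 * h₁))
  have hmul : (l.1 - l'.1) * (p.1 - p'.1) = 0 := by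
    linear_combination hp.2 - hp.1 - hp'.2 + hp'.1
  have hfst : p.1 = p'.1 :=
    sub_eq_zero.1 ((mul_eq_zero.1 hmul).resolve_left (sub_ne_zero.2 hslope))
  exact Prod.ext hfst (by rw [hp.1, hp'.1, hfst])

theorem sum_card_filter_mem_affineLine (L : Finset (F × F)) :
    ∑ p, #{l ∈ L | p ∈ affineLine l} = #L * Fintype.card F := by
  simp [sum_card_filter_mem, card_affineLine]

theorem sum_card_affineLine_inter_le (L : Finset (F × F)) {l : F × F} (hl : l ∈ L) :
    ∑ l' ∈ L, #(affineLine l ∩ affineLine l') ≤ Fintype.card F + #L := by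
  rw [← add_sum_erase L _ hl, inter_self, card_affineLine]
  gcongr
  calc ∑ l' ∈ L.erase l, #(affineLine l ∩ affineLine l') ≤ ∑ _l' ∈ L.erase l, 1 :=
        sum_le_sum fun _ hl' => card_affineLine_inter_le_one (ne_of_mem_erase hl').symm
    _ ≤ #L := by simpa using card_erase_le

theorem sum_card_filter_mem_affineLine_sq_le (L : Finset (F × F)) :
    ∑ p, #{l ∈ L | p ∈ affineLine l} ^ 2 ≤ #L * (Fintype.card F + #L) := by
  calc ∑ p, #{l ∈ L | p ∈ affineLine l} ^ 2
      = ∑ p, #{s ∈ L ×ˢ L | p ∈ affineLine s.1 ∩ affineLine s.2} := by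
        simp only [sq, ← card_product, ← filter_product, mem_inter]
    _ = ∑ l ∈ L, ∑ l' ∈ L, #(affineLine l ∩ affineLine l') := by
        rw [sum_card_filter_mem, sum_product]
    _ ≤ #L * (Fintype.card F + #L) := by
        simpa using sum_le_sum fun _ hl => sum_card_affineLine_inter_le L hl

theorem sum_sq_card_filter_mem_affineLine_sub_le (L : Finset (F × F)) :
    ∑ p, ((Fintype.card F : ℤ) * #{l ∈ L | p ∈ affineLine l} - #L) ^ 2 ≤
      (Fintype.card F : ℤ) ^ 3 * #L := by
  have hfirst : ∑ p, (#{l ∈ L | p ∈ affineLine l} : ℤ) = #L * Fintype.card F :=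
    mod_cast sum_card_filter_mem_affineLine L
  have hsecond : ∑ p, (#{l ∈ L | p ∈ affineLine l} : ℤ) ^ 2 ≤ #L * (Fintype.card F + #L) :=
    mod_cast sum_card_filter_mem_affineLine_sq_le L
  calc ∑ p, ((Fintype.card F : ℤ) * #{l ∈ L | p ∈ affineLine l} - #L) ^ 2
      = (Fintype.card F : ℤ) ^ 2 * ∑ p, (#{l ∈ L | p ∈ affineLine l} : ℤ) ^ 2
          - 2 * Fintype.card F * #L * ∑ p, (#{l ∈ L | p ∈ affineLine l} : ℤ)
          + (Fintype.card F : ℤ) ^ 2 * #L ^ 2 := by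
        simp only [sub_sq, mul_pow, sum_add_distrib, sum_sub_distrib, mul_sum, sum_const,
          card_univ, Fintype.card_prod, nsmul_eq_mul, Nat.cast_mul]
        congr 2
        · exact sum_congr rfl fun _ _ => by ring
        · ring
    _ ≤ (Fintype.card F : ℤ) ^ 2 * (#L * (Fintype.card F + #L))
          - 2 * Fintype.card F * #L * (#L * Fintype.card F)
          + (Fintype.card F : ℤ) ^ 2 * #L ^ 2 := by
        rw [hfirst]
        gcongr
    _ = (Fintype.card F : ℤ) ^ 3 * #L := by ring

/-- Each point of `P` missing all lines of `L` deviates by `#L` from the mean number `#L / q` of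
lines through a point (both scaled by `q`), so too many of them exceed the variance. -/
theorem exists_mem_affineLine {P L : Finset (F × F)} (h : Fintype.card F ^ 3 < #P * #L) :
    ∃ p ∈ P, ∃ l ∈ L, p ∈ affineLine l := by
  by_contra! hmiss
  have hL : 0 < #L := pos_of_mul_pos_right ((Nat.zero_le _).trans_lt h) (Nat.zero_le _)
  have hvariance : #P * #L * (#L : ℤ) ≤ (Fintype.card F : ℤ) ^ 3 * #L :=
    calc #P * #L * (#L : ℤ)
        = ∑ p ∈ P, ((Fintype.card F : ℤ) * #{l ∈ L | p ∈ affineLine l} - #L) ^ 2 := by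
          rw [sum_congr rfl fun p hp => by rw [filter_eq_empty_iff.2 fun l hl => hmiss p hp l hl]]
          simp [sq, mul_assoc]
      _ ≤ ∑ p, ((Fintype.card F : ℤ) * #{l ∈ L | p ∈ affineLine l} - #L) ^ 2 :=
          sum_le_univ_sum_of_nonneg fun _ => sq_nonneg _
      _ ≤ _ := sum_sq_card_filter_mem_affineLine_sub_le L
  exact h.not_ge (Nat.le_of_mul_le_mul_right (mod_cast hvariance) hL)

theorem sub_add_mul_eq_univ {A B C D : Finset F}
    (h : Fintype.card F ^ 3 < #A * #B * #C * #D) : A - B + C * D = univ := by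
  refine eq_univ_of_forall fun w => ?_
  have hcard : #(D ×ˢ A) * #((-C) ×ˢ (w +ᵥ B)) = #A * #B * #C * #D := by
    simp only [card_product, card_neg, card_vadd_finset]
    ring
  obtain ⟨⟨d, a⟩, hp, ⟨m, k⟩, hl, hline⟩ := exists_mem_affineLine (hcard ▸ h)
  rw [mem_product] at hp hl
  obtain ⟨c, hc, rfl⟩ := mem_neg.1 hl.1
  obtain ⟨b, hb, rfl⟩ := mem_vadd_finset.1 hl.2
  have ha : a = -c * d + (w + b) := mem_affineLine.1 hline
  have hw : w = a - b + c * d := by linear_combination -ha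
  exact hw ▸ add_mem_add (sub_mem_sub hp.2 hb) (mul_mem_mul hc hp.1)

theorem card_le_mul_card_image_eval_sdiff {f : F[X]} (hf : f.derivative ≠ 0)
    (hcard : (2 * f.natDegree - 1) ^ 2 ≤ Fintype.card F) :
    Fintype.card F ≤ (2 * f.natDegree - 1) *
      #(univ.image f.eval \ f.derivative.roots.toFinset.image f.eval) := by
  set V := univ.image f.eval
  set Z := f.derivative.roots.toFinset.image f.eval
  have hd : f.natDegree ≠ 0 := natDegree_ne_zero_of_derivative_ne_zero hf
  have hV : Fintype.card F ≤ f.natDegree * #V :=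
    FiniteField.card_image_polynomial_eval (natDegree_pos_iff_degree_pos.1 (Nat.pos_of_ne_zero hd))
  have hZ : #Z ≤ f.natDegree - 1 :=
    calc #Z ≤ f.derivative.roots.card := card_image_le.trans (Multiset.toFinset_card_le _)
      _ ≤ f.natDegree - 1 := (card_roots' _).trans (natDegree_derivative_le f)
  have hVZ : #V - #Z ≤ #(V \ Z) := le_card_sdiff Z V
  obtain ⟨e, he⟩ := Nat.exists_eq_succ_of_ne_zero hd
  simp only [he, Nat.succ_eq_add_one, add_tsub_cancel_right,
    show 2 * (e + 1) - 1 = 2 * e + 1 by omega] at hcard hV hZ ⊢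
  have hlarge : 2 * e < #V := by nlinarith
  have hsdiff : e + 1 ≤ #(V \ Z) := by omega
  calc Fintype.card F ≤ (e + 1) * #V := hV
    _ ≤ (e + 1) * (#(V \ Z) + e) := by gcongr; omega
    _ ≤ (2 * e + 1) * #(V \ Z) := by nlinarith

theorem card_pow_three_lt_card_image_eval_sdiff_pow_four {f : F[X]} (hf : f.derivative ≠ 0)
    (hcard : (2 * f.natDegree - 1) ^ 4 < Fintype.card F) :
    Fintype.card F ^ 3 < #(univ.image f.eval \ f.derivative.roots.toFinset.image f.eval) ^ 4 := by
  set A := univ.image f.eval \ f.derivative.roots.toFinset.image f.eval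
  have hd : f.natDegree ≠ 0 := natDegree_ne_zero_of_derivative_ne_zero hf
  have hA : Fintype.card F ≤ (2 * f.natDegree - 1) * #A :=
    card_le_mul_card_image_eval_sdiff hf <|
      (Nat.pow_le_pow_right (by omega) (by norm_num)).trans hcard.le
  have hApos : 0 < #A := pos_of_mul_pos_right (Fintype.card_pos.trans_le hA) (Nat.zero_le _)
  refine lt_of_mul_lt_mul_left ?_ (Nat.zero_le (Fintype.card F))
  calc Fintype.card F * Fintype.card F ^ 3 = Fintype.card F ^ 4 := by ring
    _ ≤ (2 * f.natDegree - 1) ^ 4 * #A ^ 4 := by rw [← mul_pow]; gcongr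
    _ < Fintype.card F * #A ^ 4 := by gcongr

end

theorem exists_eq_inv_eval_sub_inv_eval_add_mul {F : Type*} [Field F] [Finite F] {f : F[X]}
    (hf : f.derivative ≠ 0) (hcard : (2 * f.natDegree - 1) ^ 4 < Nat.card F) (w : F) :
    ∃ x y z v, f.derivative.eval x ≠ 0 ∧
      w = (f.eval x)⁻¹ - (f.eval y)⁻¹ + (f.eval z)⁻¹ * (f.eval v)⁻¹ := by
  classical
  have := Fintype.ofFinite F
  rw [Nat.card_eq_fintype_card] at hcard
  set A := univ.image f.eval \ f.derivative.roots.toFinset.image f.eval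
  have huniv : A⁻¹ - A⁻¹ + A⁻¹ * A⁻¹ = univ := sub_add_mul_eq_univ (by
    simpa only [card_inv, pow_succ, pow_zero, one_mul] using
      card_pow_three_lt_card_image_eval_sdiff_pow_four hf hcard)
  have hAinv : ∀ a ∈ A⁻¹, ∃ x, f.derivative.eval x ≠ 0 ∧ (f.eval x)⁻¹ = a := by
    intro a ha
    obtain ⟨hval, hcrit⟩ := mem_sdiff.1 (mem_inv'.1 ha)
    obtain ⟨x, -, hx⟩ := mem_image.1 hval
    refine ⟨x, fun hroot => hcrit (mem_image.2 ⟨x, ?_, hx⟩), inv_eq_iff_eq_inv.2 hx⟩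
    exact Multiset.mem_toFinset.2 ((mem_roots hf).2 hroot)
  obtain ⟨s, hs, t, ht, hw⟩ := mem_add.1 (huniv ▸ mem_univ w)
  obtain ⟨_, ha, _, hb, rfl⟩ := mem_sub.1 hs
  obtain ⟨_, hc, _, hd, rfl⟩ := mem_mul.1 ht
  obtain ⟨x, hx, rfl⟩ := hAinv _ ha
  obtain ⟨y, -, rfl⟩ := hAinv _ hb
  obtain ⟨z, -, rfl⟩ := hAinv _ hc
  obtain ⟨v, -, rfl⟩ := hAinv _ hd
  exact ⟨x, y, z, v, hx, hw.symm⟩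

end FiniteField

section Henselian

open Polynomial IsLocalRing

theorem isUnit_eval_of_residue_ne_zero {R : Type*} [CommRing R] [IsLocalRing R] {f : R[X]}
    (hres : ∀ ξ, (f.map (residue R)).eval ξ ≠ 0) (x : R) : IsUnit (f.eval x) :=
  (residue_ne_zero_iff_isUnit _).1 (eval_map_apply (residue R) x ▸ hres (residue R x))

theorem exists_eval_eq_of_eval_map_residue_eq {R : Type*} [CommRing R] [HenselianLocalRing R]
    {f : R[X]} (hf : f.Monic) {ξ : ResidueField R} {b : R}
    (hder : (f.map (residue R)).derivative.eval ξ ≠ 0)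
    (hb : (f.map (residue R)).eval ξ = residue R b) : ∃ x, f.eval x = b := by
  obtain ⟨x, rfl⟩ := residue_surjective ξ
  rw [derivative_map, eval_map_apply, residue_ne_zero_iff_isUnit] at hder
  have hdeg : f.natDegree ≠ 0 :=
    natDegree_ne_zero_of_derivative_ne_zero fun h => by simp [h] at hder
  have hmonic : (f - C b).Monic := hf.sub_of_left
    (degree_C_le.trans_lt (natDegree_pos_iff_degree_pos.1 (Nat.pos_of_ne_zero hdeg)))
  have hroot : (f - C b).eval x ∈ maximalIdeal R := by
    rw [← residue_eq_zero_iff, eval_sub, eval_C, map_sub, ← eval_map_apply, hb, sub_self]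
  obtain ⟨x', hx', -⟩ :=
    HenselianLocalRing.is_henselian (f - C b) hmonic x hroot (by simpa using hder)
  exact ⟨x', by simpa [sub_eq_zero] using hx'⟩

variable {K : Type*} [Field K] {O : ValuationSubring K} {f : O[X]}

theorem inv_eval_map_subtype_mem (hf : f.Monic)
    (hres : ∀ ξ, (f.map (residue O)).eval ξ ≠ 0) (x : K) :
    ((f.map O.subtype).eval x)⁻¹ ∈ O := by
  rcases eq_or_ne f.natDegree 0 with hdeg | hdeg
  · simp [hf.natDegree_eq_zero.1 hdeg]
  refine (O.mem_or_inv_mem _).elim (fun hfx => ?_) id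
  have hint : IsIntegral O (aeval x f) := by
    rw [aeval_def, ← eval_map]
    exact isIntegral_algebraMap (x := (⟨_, hfx⟩ : O))
  obtain ⟨y, rfl⟩ := IsIntegrallyClosed.isIntegral_iff.1 (hint.of_aeval_monic hf hdeg)
  obtain ⟨u, hu⟩ := isUnit_eval_of_residue_ne_zero hres y
  have hinv : ((f.map O.subtype).eval (y : K))⁻¹ = ((u⁻¹ : Oˣ) : O) := by
    rw [← O.subtype_apply, eval_map_apply, ← hu]
    exact (map_units_inv O.subtype u).symm
  exact hinv ▸ Subtype.coe_prop _

theorem exists_inv_eval_eq_of_residue_eq [HenselianLocalRing O] (hf : f.Monic)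
    {ξ : ResidueField O} (hξ : (f.map (residue O)).eval ξ ≠ 0)
    (hder : (f.map (residue O)).derivative.eval ξ ≠ 0) {u : O}
    (hu : residue O u = ((f.map (residue O)).eval ξ)⁻¹) :
    ∃ x : K, ((f.map O.subtype).eval x)⁻¹ = u := by
  obtain ⟨u, rfl⟩ : IsUnit u := (residue_ne_zero_iff_isUnit u).1 (hu ▸ inv_ne_zero hξ)
  obtain ⟨y, hy⟩ := exists_eval_eq_of_eval_map_residue_eq hf (b := ((u⁻¹ : Oˣ) : O)) hder
    (by rw [map_units_inv, hu, inv_inv])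
  refine ⟨O.subtype y, ?_⟩
  rw [eval_map_apply, hy, map_units_inv, inv_inv, O.subtype_apply]

theorem exists_residue_eq_inv_eval (hres : ∀ ξ, (f.map (residue O)).eval ξ ≠ 0)
    (ξ : ResidueField O) : ∃ (x : K) (u : O), ((f.map O.subtype).eval x)⁻¹ = u ∧
      residue O u = ((f.map (residue O)).eval ξ)⁻¹ := by
  obtain ⟨y, rfl⟩ := residue_surjective ξ
  obtain ⟨u, hu⟩ := isUnit_eval_of_residue_ne_zero hres y
  refine ⟨O.subtype y, (u⁻¹ : Oˣ), ?_, ?_⟩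
  · rw [eval_map_apply, ← hu]
    exact (map_units_inv O.subtype u).symm
  · rw [eval_map_apply, ← hu, map_units_inv]

theorem mem_valuationSubring_iff_of_residueField [HenselianLocalRing O] (hf : f.Monic)
    (hres : ∀ ξ, (f.map (residue O)).eval ξ ≠ 0)
    (h : ∀ ω : ResidueField O, ∃ ξ η, (f.map (residue O)).derivative.eval ξ ≠ 0 ∧
      (ω = ((f.map (residue O)).eval ξ)⁻¹ - ((f.map (residue O)).eval η)⁻¹ ∨
      ∃ ζ θ, ω = ((f.map (residue O)).eval ξ)⁻¹ - ((f.map (residue O)).eval η)⁻¹ +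
        ((f.map (residue O)).eval ζ)⁻¹ * ((f.map (residue O)).eval θ)⁻¹)) (w : K) :
    w ∈ O ↔ ∃ x y : K,
      w = ((f.map O.subtype).eval x)⁻¹ - ((f.map O.subtype).eval y)⁻¹ ∨
      ∃ z v : K, w = ((f.map O.subtype).eval x)⁻¹ - ((f.map O.subtype).eval y)⁻¹ +
        ((f.map O.subtype).eval z)⁻¹ * ((f.map O.subtype).eval v)⁻¹ := by
  have hmem := inv_eval_map_subtype_mem hf hres
  constructor
  · intro hw
    lift w to O using hw
    obtain ⟨ξ, η, hder, hω⟩ := h (residue O w)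
    obtain ⟨y, b, hy, hb⟩ := exists_residue_eq_inv_eval hres η
    rcases hω with hω | ⟨ζ, θ, hω⟩
    · obtain ⟨x, hx⟩ := exists_inv_eval_eq_of_residue_eq (u := w + b) hf (hres ξ) hder
        (by rw [map_add, hω, hb, sub_add_cancel])
      exact ⟨x, y, Or.inl (by rw [hx, hy]; push_cast; ring)⟩
    · obtain ⟨z, c, hz, hc⟩ := exists_residue_eq_inv_eval hres ζ
      obtain ⟨v, d, hv, hd⟩ := exists_residue_eq_inv_eval hres θ
      obtain ⟨x, hx⟩ := exists_inv_eval_eq_of_residue_eq (u := w + b - c * d) hf (hres ξ) hder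
        (by rw [map_sub, map_add, map_mul, hω, hb, hc, hd]; ring)
      exact ⟨x, y, Or.inr ⟨z, v, by rw [hx, hy, hz, hv]; push_cast; ring⟩⟩
  · rintro ⟨x, y, rfl | ⟨z, v, rfl⟩⟩
    · exact sub_mem (hmem x) (hmem y)
    · exact add_mem (sub_mem (hmem x) (hmem y)) (mul_mem (hmem z) (hmem v))

theorem statement13_general (K : Type*) [Field K] (O : ValuationSubring K) [HenselianLocalRing O]
    (f : O[X]) (hf : f.Monic) (hres : ∀ ξ, (f.map (residue O)).eval ξ ≠ 0)
    (ha : ∃ a : O, f.derivative.eval a ∉ maximalIdeal O)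
    (hF : (IsPAC (ResidueField O) ∧ ∃ α : AlgebraicClosure (ResidueField O),
        rootMultiplicity α ((f.map (residue O)).map
          (algebraMap _ (AlgebraicClosure (ResidueField O)))) = 1) ∨
      (Finite (ResidueField O) ∧ (2 * f.natDegree - 1) ^ 4 < Nat.card (ResidueField O))) (w : K) :
    w ∈ O ↔ ∃ x y : K,
      w = ((f.map O.subtype).eval x)⁻¹ - ((f.map O.subtype).eval y)⁻¹ ∨
      ∃ z v : K, w = ((f.map O.subtype).eval x)⁻¹ - ((f.map O.subtype).eval y)⁻¹ +
        ((f.map O.subtype).eval z)⁻¹ * ((f.map O.subtype).eval v)⁻¹ := by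
  obtain ⟨a, ha⟩ := ha
  have hder : (f.map (residue O)).derivative.eval (residue O a) ≠ 0 := by
    rwa [derivative_map, eval_map_apply, Ne, residue_eq_zero_iff]
  have hder₀ : (f.map (residue O)).derivative ≠ 0 := fun h => by simp [h] at hder
  have hdeg : (f.map (residue O)).natDegree ≠ 0 := natDegree_ne_zero_of_derivative_ne_zero hder₀
  refine mem_valuationSubring_iff_of_residueField hf hres (fun ω => ?_) w
  rcases hF with ⟨hPAC, α, hα⟩ | ⟨_, hcard⟩
  · refine ⟨residue O a, residue O a, hder, ?_⟩
    rcases eq_or_ne ω 0 with rfl | hω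
    · exact Or.inl (sub_self _).symm
    · obtain ⟨ζ, θ, h⟩ :=
        hPAC.exists_eval_mul_eval_eq hα (Nat.pos_of_ne_zero hdeg) (inv_ne_zero hω)
      exact Or.inr ⟨ζ, θ, by rw [sub_self, zero_add, ← mul_inv, h, inv_inv]⟩
  · obtain ⟨ξ, η, ζ, θ, hξ, h⟩ := exists_eq_inv_eval_sub_inv_eval_add_mul hder₀
      (by rwa [hf.natDegree_map]) ω
    exact ⟨ξ, η, hξ, Or.inr ⟨ζ, θ, h⟩⟩

end Henselian

/-- Let `K` be a henselian valued field with valuation ring `O`, maximal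
ideal `m` and residue field `F`, and `f ∈ O[X]` monic whose reduction is square-free
with no zero in `F`, with some `a ∈ O` such that `f'(a) ∉ m`. If `F` is PAC, or finite
with `|F| > (2·deg f − 1)^4`, then
`O = (f(K)⁻¹ − f(K)⁻¹) + (f(K)⁻¹·f(K)⁻¹ ∪ {0})`: an element `w ∈ K` lies in `O` iff
`w = f(x)⁻¹ − f(y)⁻¹ + t` with `t = 0` or `t = f(z)⁻¹ f(v)⁻¹`. -/
theorem statement13 (K : Type*) [Field K] (O : ValuationSubring K) [HenselianLocalRing O]
    (f : Polynomial O) (hf : f.Monic)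
    (hsf : Squarefree ((f.map (IsLocalRing.residue O)).map
      (algebraMap (IsLocalRing.ResidueField O)
        (AlgebraicClosure (IsLocalRing.ResidueField O)))))
    (hres : ∀ z : IsLocalRing.ResidueField O,
      Polynomial.eval z (f.map (IsLocalRing.residue O)) ≠ 0)
    (ha : ∃ a : O, Polynomial.eval a f.derivative ∉ IsLocalRing.maximalIdeal O)
    (hF : IsPAC (IsLocalRing.ResidueField O) ∨
      (Finite (IsLocalRing.ResidueField O) ∧
        (2 * f.natDegree - 1) ^ 4 < Nat.card (IsLocalRing.ResidueField O))) :
    ∀ w : K, w ∈ O ↔ ∃ x y : K,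
      w = (Polynomial.eval x (f.map O.subtype))⁻¹ -
          (Polynomial.eval y (f.map O.subtype))⁻¹ ∨
      ∃ z v : K, w = (Polynomial.eval x (f.map O.subtype))⁻¹ -
          (Polynomial.eval y (f.map O.subtype))⁻¹ +
          (Polynomial.eval z (f.map O.subtype))⁻¹ *
          (Polynomial.eval v (f.map O.subtype))⁻¹ := by
  obtain ⟨a, ha⟩ := ha
  have hdeg : f.natDegree ≠ 0 :=
    natDegree_ne_zero_of_derivative_ne_zero fun h => by simp [h] at ha
  have hroot := exists_rootMultiplicity_eq_one hsf (by simpa [hf.natDegree_map] using hdeg)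
  exact statement13_general K O f hf hres ⟨a, ha⟩ (hF.imp_left fun h => ⟨h, hroot⟩)
end

section
/- Let K be a henselian valued field with valuation ring O and residue field F. If F is pseudo-algebraically closed and the relative algebraic closure of the prime field in F is not algebraically closed, then O is definable in K by an existential formula in the language of rings without parameters. -/
open FirstOrder Language

attribute [local instance] FirstOrder.Ring.compatibleRingOfRing

/-! Since the relative algebraic closure of the prime field in `F` is not algebraically closed, some
monic `f ∈ ℤ[X]` of degree `n` has no root in `F` and nonzero derivative over `F`. Let `S` be the
set of values of `z ^ n / f z` on `K`, and `T = S - S`. Then `O = T - T - T`, which is a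
Diophantine set, hence existentially definable.

* `S ⊆ O`: if `z ^ n / f z` had a pole modulo the maximal ideal, then `z` would be integral, hence
  in `O`, and `f z` would not be a unit, so `f` would have a root in `F`.
* `T` contains the maximal ideal `m`: for a generic value `c` of `z ^ n / f z` on `F`, the fiber
  over `c` has a simple point, which Hensel's lemma lifts to the fiber over every lift of `c`, and
  each `t ∈ m` is a difference `(c + t) - c`.
* `T` covers all but finitely many elements of `F`: for almost all `c`, the curve
  `x ^ n / f x - y ^ n / f y = c` is absolutely irreducible, because the right-hand side of
  `y ^ n / f y = x ^ n / f x - c` has a simple zero, above which the totally ramified point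
  `y = 0` makes the Eisenstein criterion applicable. Hence `T - T` covers `F`.
-/

open Polynomial Polynomial.Bivariate Filter
open scoped Pointwise

/-- A subset of a ring is Diophantine (without parameters) if it is the image, under a polynomial
map, of the zero set of finitely many polynomials over `ℤ` in finitely many variables. A polynomial
image, rather than a coordinate projection, makes closure under ring operations immediate. -/
def IsDiophantine {R : Type*} [CommRing R] (A : Set R) : Prop :=
  ∃ (σ ι : Type) (_ : Finite σ) (_ : Finite ι) (p : ι → FreeCommRing σ) (t : FreeCommRing σ),
    A = (fun v : σ → R => FreeCommRing.lift v t) '' {v | ∀ i, FreeCommRing.lift v (p i) = 0}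

section Diophantine

variable {R : Type*} [CommRing R] {A B : Set R}

theorem lift_freeCommRing_map {σ τ : Type*} (g : σ → τ) (v : τ → R) (p : FreeCommRing σ) :
    FreeCommRing.lift v (FreeCommRing.map g p) = FreeCommRing.lift (v ∘ g) p :=
  DFunLike.congr_fun (f := (FreeCommRing.lift v).comp (FreeCommRing.map g))
    (FreeCommRing.hom_ext fun x => by
      simp only [RingHom.comp_apply, FreeCommRing.map_of, FreeCommRing.lift_of,
        Function.comp_apply]) p

theorem IsDiophantine.sub (hA : IsDiophantine A) (hB : IsDiophantine B) :
    IsDiophantine (A - B) := by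
  obtain ⟨σ, ι, _, _, p, s, rfl⟩ := hA
  obtain ⟨τ, κ, _, _, q, t, rfl⟩ := hB
  refine ⟨σ ⊕ τ, ι ⊕ κ, inferInstance, inferInstance,
    Sum.elim (fun i => FreeCommRing.map Sum.inl (p i)) (fun j => FreeCommRing.map Sum.inr (q j)),
    FreeCommRing.map Sum.inl s - FreeCommRing.map Sum.inr t, ?_⟩
  ext x
  simp only [Set.mem_sub, Set.mem_image, Set.mem_ofPred_eq, map_sub, lift_freeCommRing_map,
    Sum.forall, Sum.elim_inl, Sum.elim_inr]
  constructor
  · rintro ⟨_, ⟨v, hv, rfl⟩, _, ⟨w, hw, rfl⟩, rfl⟩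
    exact ⟨Sum.elim v w, ⟨hv, hw⟩, rfl⟩
  · rintro ⟨v, ⟨hl, hr⟩, rfl⟩
    exact ⟨_, ⟨v ∘ Sum.inl, hl, rfl⟩, _, ⟨v ∘ Sum.inr, hr, rfl⟩, rfl⟩

theorem isQF_iInf {L : Language} {α ι : Type*} [Finite ι] {n : ℕ}
    {φ : ι → L.BoundedFormula α n} (h : ∀ i, (φ i).IsQF) : (BoundedFormula.iInf φ).IsQF := by
  have key : ∀ l : List (L.BoundedFormula α n), (∀ ψ ∈ l, ψ.IsQF) →
      (l.foldr (· ⊓ ·) ⊤).IsQF := by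
    intro l hl
    induction l with
    | nil => exact .top
    | cons ψ l ih =>
      rw [List.forall_mem_cons] at hl
      exact hl.1.inf (ih hl.2)
  refine key _ fun ψ hψ => ?_
  obtain ⟨i, -, rfl⟩ := List.mem_map.1 hψ
  exact h i

theorem IsDiophantine.exists_isQF_realize_exs_iff (hA : IsDiophantine A) :
    ∃ (n : ℕ) (ψ : Language.ring.BoundedFormula (Fin 1) n), ψ.IsQF ∧
      ∀ x : R, ψ.exs.Realize (fun _ => x) ↔ x ∈ A := by
  obtain ⟨σ, ι, _, _, p, t, rfl⟩ := hA
  obtain ⟨n, ⟨e⟩⟩ := Finite.exists_equiv_fin σ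
  let isZero (q : FreeCommRing (Fin 1 ⊕ Fin n)) : Language.ring.BoundedFormula (Fin 1) n :=
    (Ring.termOfFreeCommRing q).bdEqual (Ring.termOfFreeCommRing 0)
  have isQF_isZero (q) : (isZero q).IsQF := (BoundedFormula.IsAtomic.equal _ _).isQF
  have realize_isZero (x : R) (v : Fin n → R) (q) : (isZero q).Realize (fun _ => x) v ↔
      FreeCommRing.lift (Sum.elim (fun _ => x) v) q = 0 := by
    simp only [isZero, BoundedFormula.realize_bdEqual, Ring.realize_termOfFreeCommRing, map_zero]
  let rename : FreeCommRing σ →+* FreeCommRing (Fin 1 ⊕ Fin n) := FreeCommRing.map (Sum.inr ∘ e)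
  refine ⟨n, isZero (rename t - FreeCommRing.of (Sum.inl 0)) ⊓
    BoundedFormula.iInf fun i => isZero (rename (p i)),
    (isQF_isZero _).inf (isQF_iInf fun _ => isQF_isZero _), fun x => ?_⟩
  simp only [BoundedFormula.realize_exs, BoundedFormula.realize_inf, BoundedFormula.realize_iInf,
    realize_isZero, rename, map_sub, FreeCommRing.lift_of, Sum.elim_inl, lift_freeCommRing_map,
    sub_eq_zero, ← Function.comp_assoc, Sum.elim_comp_inr, Set.mem_image, Set.mem_ofPred_eq]
  refine ⟨fun ⟨v, ht, hp⟩ => ⟨v ∘ e, hp, ht⟩, fun ⟨v, hp, ht⟩ => ⟨v ∘ e.symm, ?_⟩⟩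
  simpa only [Function.comp_assoc, Equiv.symm_comp_self, Function.comp_id] using ⟨ht, hp⟩

end Diophantine

section LeadingCoeff

variable {R : Type*} [CommRing R]

theorem coeff_natDegree_sub_C_mul {p q : R[X]} (hp : p.Monic) (hq : q.Monic)
    (hpq : q.natDegree = p.natDegree) (c : R) : (p - C c * q).coeff p.natDegree = 1 - c := by
  rw [coeff_sub, coeff_C_mul, hp.coeff_natDegree, ← hpq, hq.coeff_natDegree, mul_one]

theorem natDegree_sub_C_mul {p q : R[X]} (hp : p.Monic) (hq : q.Monic)
    (hpq : q.natDegree = p.natDegree) {c : R} (hc : c ≠ 1) :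
    (p - C c * q).natDegree = p.natDegree := by
  refine natDegree_eq_of_le_of_coeff_ne_zero ?_ ?_
  · exact (natDegree_sub_le _ _).trans
      (max_le le_rfl ((natDegree_C_mul_le _ _).trans hpq.le))
  · rw [coeff_natDegree_sub_C_mul hp hq hpq]
    exact sub_ne_zero.2 hc.symm

theorem leadingCoeff_sub_C_mul {p q : R[X]} (hp : p.Monic) (hq : q.Monic)
    (hpq : q.natDegree = p.natDegree) {c : R} (hc : c ≠ 1) :
    (p - C c * q).leadingCoeff = 1 - c := by
  rw [leadingCoeff, natDegree_sub_C_mul hp hq hpq hc, coeff_natDegree_sub_C_mul hp hq hpq]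

end LeadingCoeff

section PowDivFiber

variable {R S : Type*} [CommRing R] [CommRing S]

/-- The polynomial `z ^ n - c * f z`, where `n` is the degree of `f`. Its roots at which `f` does
not vanish are the points where the rational function `z ^ n / f z` takes the value `c`. -/
noncomputable def powDivFiber (f : R[X]) (c : R) : R[X] := X ^ f.natDegree - C c * f

/-- The values of the rational function `z ^ n / f z`, where `n` is the degree of `f`, written
without denominators so as to make sense over any ring. -/
def powDivValues (f : R[X]) : Set R := {c | ∃ z, (powDivFiber f c).IsRoot z}

/-- The differences of two values of the rational function `z ^ n / f z`, where `n` is the degree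
of `f`. -/
def powDivDifferences (f : R[X]) : Set R := powDivValues f - powDivValues f

theorem isRoot_powDivFiber {f : R[X]} {c z : R} :
    (powDivFiber f c).IsRoot z ↔ z ^ f.natDegree = c * f.eval z := by
  simp only [powDivFiber, IsRoot, eval_sub, eval_pow, eval_X, eval_mul, eval_C, sub_eq_zero]

theorem map_powDivFiber [Nontrivial S] {f : R[X]} (hf : f.Monic) (φ : R →+* S) (c : R) :
    (powDivFiber f c).map φ = powDivFiber (f.map φ) (φ c) := by
  simp only [powDivFiber, Polynomial.map_sub, Polynomial.map_pow, map_X, Polynomial.map_mul, map_C,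
    hf.natDegree_map]

theorem map_mem_powDivValues [Nontrivial S] {f : R[X]} (hf : f.Monic) (φ : R →+* S) {c : R}
    (hc : c ∈ powDivValues f) : φ c ∈ powDivValues (f.map φ) := by
  obtain ⟨z, hz⟩ := hc
  exact ⟨φ z, map_powDivFiber hf φ c ▸ hz.map⟩

theorem isDiophantine_powDivValues [Nontrivial R] {f : ℤ[X]} (hf : f.Monic) :
    IsDiophantine (powDivValues (f.map (Int.castRingHom R))) := by
  let s : FreeCommRing (Fin 2) := FreeCommRing.of 0
  let z : FreeCommRing (Fin 2) := FreeCommRing.of 1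
  refine ⟨Fin 2, Unit, inferInstance, inferInstance,
    fun _ => z ^ f.natDegree - s * f.eval₂ (Int.castRingHom _) z, s, ?_⟩
  ext c
  simp only [powDivValues, Set.mem_ofPred_eq, isRoot_powDivFiber, hf.natDegree_map, eval_map,
    Set.mem_image, s, z, map_sub, map_mul, map_pow, hom_eval₂, FreeCommRing.lift_of, sub_eq_zero,
    forall_const, RingHom.eq_intCast']
  constructor
  · rintro ⟨y, hy⟩
    exact ⟨![c, y], hy, rfl⟩
  · rintro ⟨v, hv, rfl⟩
    exact ⟨v 1, hv⟩

theorem natDegree_powDivFiber [Nontrivial R] {f : R[X]} (hf : f.Monic) {c : R} (hc : c ≠ 1) :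
    (powDivFiber f c).natDegree = f.natDegree := by
  rw [powDivFiber, natDegree_sub_C_mul (monic_X_pow _) hf (natDegree_X_pow _).symm hc,
    natDegree_X_pow]

theorem leadingCoeff_powDivFiber [Nontrivial R] {f : R[X]} (hf : f.Monic) {c : R} (hc : c ≠ 1) :
    (powDivFiber f c).leadingCoeff = 1 - c :=
  leadingCoeff_sub_C_mul (monic_X_pow _) hf (natDegree_X_pow _).symm hc

end PowDivFiber

section CriticalValues

variable {F : Type*} [Field F] {f : F[X]}

theorem isRoot_powDivFiber_div {z : F} (hz : f.eval z ≠ 0) :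
    (powDivFiber f (z ^ f.natDegree / f.eval z)).IsRoot z :=
  isRoot_powDivFiber.2 (div_mul_cancel₀ _ hz).symm

theorem isCoprime_powDivFiber (hf : f.coeff 0 ≠ 0) (c : F) : IsCoprime f (powDivFiber f c) := by
  have hX : IsCoprime f (X ^ f.natDegree) :=
    (irreducible_X.coprime_iff_not_dvd.2 (mt X_dvd_iff.1 hf)).symm.pow_right
  simpa only [powDivFiber, sub_eq_add_neg, ← neg_mul] using hX.add_mul_right_right (-C c)

theorem eval_ne_zero_of_isRoot_powDivFiber (hf : f.coeff 0 ≠ 0) {c r : F}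
    (hr : (powDivFiber f c).IsRoot r) : f.eval r ≠ 0 := by
  intro hfr
  rw [isRoot_powDivFiber, hfr, mul_zero] at hr
  rw [eq_zero_of_pow_eq_zero hr, ← coeff_zero_eq_eval_zero] at hfr
  exact hf hfr

/-- The polynomial `z * f' z - n * f z`, where `n` is the degree of `f`. Away from `0`, its roots
are the critical points of the rational function `z ^ n / f z`, whose derivative is
`-z ^ (n - 1) * (z * f' z - n * f z) / (f z) ^ 2`. -/
noncomputable def powDivCritical (f : F[X]) : F[X] :=
  X * derivative f - (f.natDegree : F[X]) * f

theorem powDivCritical_ne_zero (hf : f.coeff 0 ≠ 0) (hf' : derivative f ≠ 0) :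
    powDivCritical f ≠ 0 := by
  intro h
  have hn : (f.natDegree : F) = 0 := by
    have h0 : (powDivCritical f).coeff 0 = 0 := by rw [h, coeff_zero]
    simpa [powDivCritical, hf] using h0
  have hn : (f.natDegree : F[X]) = 0 := by rw [← C_eq_natCast, hn, C_0]
  rw [powDivCritical, hn, zero_mul, sub_zero] at h
  exact hf' ((mul_eq_zero.1 h).resolve_left X_ne_zero)

theorem eval_derivative_powDivFiber_ne_zero {c r : F} (hr : (powDivFiber f c).IsRoot r)
    (hr' : (X * powDivCritical f).eval r ≠ 0) : (derivative (powDivFiber f c)).eval r ≠ 0 := by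
  rw [isRoot_powDivFiber] at hr
  rw [eval_mul, eval_X] at hr'
  have hc : c ≠ 0 := by
    rintro rfl
    exact left_ne_zero_of_mul hr' (eq_zero_of_pow_eq_zero (hr.trans (zero_mul _)))
  have hpow : r * (f.natDegree * r ^ (f.natDegree - 1)) = f.natDegree * r ^ f.natDegree := by
    rcases eq_or_ne f.natDegree 0 with hn | hn
    · simp [hn]
    · rw [mul_left_comm, mul_pow_sub_one hn]
  have key : r * (derivative (powDivFiber f c)).eval r = -(c * (powDivCritical f).eval r) := by
    simp only [powDivFiber, powDivCritical, derivative_sub, derivative_X_pow, derivative_C_mul,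
      eval_sub, eval_mul, eval_C, eval_pow, eval_X, eval_natCast]
    linear_combination hpow + f.natDegree * hr
  refine right_ne_zero_of_mul (a := r) ?_
  rw [key]
  exact neg_ne_zero.2 (mul_ne_zero hc (right_ne_zero_of_mul hr'))

theorem eventually_exists_simple_root_powDivFiber [IsAlgClosed F] (hf : f.Monic)
    (hf0 : f.coeff 0 ≠ 0) (hf' : derivative f ≠ 0) :
    ∀ᶠ c in cofinite, ∃ r, (powDivFiber f c).IsRoot r ∧
      (derivative (powDivFiber f c)).eval r ≠ 0 := by
  let critical : Set F := {r | (X * powDivCritical f).IsRoot r}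
  have hcritical : critical.Finite :=
    finite_setOfPred_isRoot (mul_ne_zero X_ne_zero (powDivCritical_ne_zero hf0 hf'))
  filter_upwards [eventually_cofinite_ne 1,
    (hcritical.image fun r => r ^ f.natDegree / f.eval r).eventually_cofinite_notMem]
    with c hc1 hc
  have hdeg : (powDivFiber f c).degree ≠ 0 := by
    refine mt natDegree_eq_of_degree_eq_some ?_
    rw [natDegree_powDivFiber hf hc1]
    exact mt derivative_of_natDegree_zero hf'
  obtain ⟨r, hr⟩ := IsAlgClosed.exists_root _ hdeg
  refine ⟨r, hr, eval_derivative_powDivFiber_ne_zero hr fun hcrit => hc ⟨r, hcrit, ?_⟩⟩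
  exact (div_eq_iff (eval_ne_zero_of_isRoot_powDivFiber hf0 hr)).2 (isRoot_powDivFiber.1 hr)

theorem exists_simple_root_powDivFiber [Infinite F] (hf0 : f.coeff 0 ≠ 0)
    (hf' : derivative f ≠ 0) :
    ∃ c r, c ≠ 1 ∧ (powDivFiber f c).IsRoot r ∧ (derivative (powDivFiber f c)).eval r ≠ 0 := by
  have hfiber : powDivFiber f 1 ≠ 0 := by
    intro h
    have hunit : IsUnit f := isCoprime_zero_right.1 (h ▸ isCoprime_powDivFiber hf0 1)
    exact hf' (derivative_of_natDegree_zero (natDegree_eq_zero_of_isUnit hunit))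
  have hf : f ≠ 0 := fun h => hf' (by rw [h, derivative_zero])
  obtain ⟨r, hr⟩ : ∃ r, (f * powDivFiber f 1 * (X * powDivCritical f)).eval r ≠ 0 := by
    by_contra! h
    exact mul_ne_zero (mul_ne_zero hf hfiber)
      (mul_ne_zero X_ne_zero (powDivCritical_ne_zero hf0 hf'))
      (Polynomial.funext fun r => (h r).trans eval_zero.symm)
  rw [eval_mul, eval_mul, mul_ne_zero_iff, mul_ne_zero_iff] at hr
  obtain ⟨⟨hfr, hr1⟩, hcrit⟩ := hr
  have hroot := isRoot_powDivFiber_div hfr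
  exact ⟨_, r, fun h1 => hr1 (h1 ▸ hroot), hroot,
    eval_derivative_powDivFiber_ne_zero hroot hcrit⟩

end CriticalValues

section Eisenstein

theorem irreducible_C_mul_X_pow_sub_C_mul {R : Type*} [CommRing R] [IsDomain R] {a q p : R}
    (hp : Prime p) (hpq : p ∣ q) (hpq2 : ¬ p ^ 2 ∣ q) (haq : IsRelPrime a q) {g : R[X]} {n : ℕ}
    (hn : n ≠ 0) (hgn : g.natDegree ≤ n) (hg0 : IsUnit (g.coeff 0)) :
    Irreducible (C a * X ^ n - C q * g) := by
  set G := C a * X ^ n - C q * g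
  have hpa : ¬ p ∣ a := fun h => hp.not_isUnit (haq h hpq)
  have coeff_of_ne {i : ℕ} (hi : i ≠ n) : G.coeff i = -(q * g.coeff i) := by
    simp only [G, coeff_sub, coeff_C_mul, coeff_X_pow, if_neg hi, mul_zero, zero_sub]
  have coeff_n : G.coeff n = a - q * g.coeff n := by
    simp only [G, coeff_sub, coeff_C_mul, coeff_X_pow_self, mul_one]
  have hpn : ¬ p ∣ G.coeff n := by
    rwa [coeff_n, dvd_sub_left (hpq.mul_right _)]
  have hdeg : G.natDegree = n :=
    natDegree_eq_of_le_of_coeff_ne_zero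
      ((natDegree_sub_le _ _).trans
        (max_le (natDegree_C_mul_X_pow_le _ _) ((natDegree_C_mul_le _ _).trans hgn)))
      fun h => hpn (h ▸ dvd_zero p)
  have hdeg' : G.degree = n := degree_eq_iff_natDegree_eq_of_pos (Nat.pos_of_ne_zero hn) |>.2 hdeg
  refine irreducible_of_eisenstein_criterion (P := Ideal.span {p})
    ((Ideal.span_singleton_prime hp.ne_zero).2 hp) ?_ ?_ ?_ ?_ ?_
  · rwa [Ideal.mem_span_singleton, leadingCoeff, hdeg]
  · intro i hi
    rw [hdeg', Nat.cast_lt] at hi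
    rw [Ideal.mem_span_singleton, coeff_of_ne hi.ne, dvd_neg]
    exact hpq.mul_right _
  · rw [hdeg']
    exact_mod_cast Nat.pos_of_ne_zero hn
  · rwa [Ideal.span_singleton_pow, Ideal.mem_span_singleton, coeff_of_ne hn.symm, dvd_neg,
      hg0.dvd_mul_right]
  · intro d hd
    rw [C_dvd_iff_dvd_coeff] at hd
    have hdq : d ∣ q := hg0.dvd_mul_right.1 (dvd_neg.1 (coeff_of_ne hn.symm ▸ hd 0))
    have hda : d ∣ a := (dvd_sub_left (hdq.mul_right _)).1 (coeff_n ▸ hd n)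
    exact haq hda hdq

end Eisenstein

section Curve

variable {F : Type*} [Field F]

/-- The plane curve `f x * y ^ n - (x ^ n - c * f x) * f y = 0`, where `n` is the degree of `f`.
Its points at which `f` does not vanish are the solutions of
`x ^ n / f x - y ^ n / f y = c`. -/
noncomputable def powDivSubCurve (f : F[X]) (c : F) : F[X][Y] :=
  C f * X ^ f.natDegree - C (powDivFiber f c) * f.map C

theorem evalEval_powDivSubCurve {f : F[X]} (c x y : F) : (powDivSubCurve f c).evalEval x y =
    f.eval x * y ^ f.natDegree - (x ^ f.natDegree - c * f.eval x) * f.eval y := by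
  simp only [powDivSubCurve, powDivFiber, evalEval_sub, evalEval_mul, evalEval_C, evalEval_pow,
    evalEval_X, evalEval_map_C, eval_sub, eval_pow, eval_X, eval_mul, eval_C]

theorem map_powDivSubCurve {E : Type*} [Field E] (φ : F →+* E) {f : F[X]} (hf : f.Monic) (c : F) :
    (powDivSubCurve f c).map (mapRingHom φ) = powDivSubCurve (f.map φ) (φ c) := by
  have hC : (mapRingHom φ).comp C = C.comp φ := RingHom.ext fun a => map_C φ
  simp only [powDivSubCurve, Polynomial.map_sub, Polynomial.map_mul, map_C, Polynomial.map_pow,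
    map_X, coe_mapRingHom, map_powDivFiber hf, Polynomial.map_map, hC, hf.natDegree_map]

theorem not_X_sub_C_sq_dvd {R : Type*} [CommRing R] {p : R[X]} {r : R}
    (hr : (derivative p).eval r ≠ 0) : ¬ (X - C r) ^ 2 ∣ p := by
  intro h
  have hdvd := pow_sub_one_dvd_derivative_of_pow_dvd h
  rw [Nat.add_one_sub_one, pow_one, dvd_iff_isRoot] at hdvd
  exact hr hdvd

theorem irreducible_powDivSubCurve {f : F[X]} (hf0 : f.coeff 0 ≠ 0) (hf' : derivative f ≠ 0)
    {c r : F} (hr : (powDivFiber f c).IsRoot r)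
    (hr' : (derivative (powDivFiber f c)).eval r ≠ 0) : Irreducible (powDivSubCurve f c) :=
  irreducible_C_mul_X_pow_sub_C_mul (prime_X_sub_C r) (dvd_iff_isRoot.2 hr)
    (not_X_sub_C_sq_dvd hr') (isCoprime_powDivFiber hf0 c).isRelPrime
    (mt derivative_of_natDegree_zero hf') natDegree_map_le
    (by rw [coeff_map]; exact (isUnit_iff_ne_zero.2 hf0).map C)

end Curve

section PAC

theorem map_equivMvPolynomial {R S : Type*} [CommRing R] [CommRing S] (φ : R →+* S) (G : R[X][Y]) :
    MvPolynomial.map φ (equivMvPolynomial R G) =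
      equivMvPolynomial S (G.map (mapRingHom φ)) := by
  have h : (MvPolynomial.map φ).comp (equivMvPolynomial R).toRingHom =
      (equivMvPolynomial S).toRingHom.comp (mapRingHom (mapRingHom φ)) := by
    ext <;> simp
  exact RingHom.congr_fun h G

theorem eval_equivMvPolynomial {R : Type*} [CommRing R] (G : R[X][Y]) (v : Fin 2 → R) :
    MvPolynomial.eval v (equivMvPolynomial R G) = G.evalEval (v 0) (v 1) := by
  have h : (MvPolynomial.eval v).comp (equivMvPolynomial R).toRingHom =
      evalEvalRingHom (v 0) (v 1) := by
    ext <;> simp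
  exact RingHom.congr_fun h G

theorem isLocalHom_mvPolynomial_map {σ R S : Type*} [CommRing R] [IsReduced R] [CommRing S]
    [IsReduced S] (φ : R →+* S) [IsLocalHom φ] (hφ : Function.Injective φ) :
    IsLocalHom (MvPolynomial.map (σ := σ) φ) where
  map_nonunit p hp := by
    simpa only [MvPolynomial.isUnit_iff_totalDegree_of_isReduced, MvPolynomial.coeff_map,
      isUnit_map_iff, MvPolynomial.totalDegree, MvPolynomial.support_map_of_injective p hφ] using hp

variable {F : Type*} [Field F]

theorem IsPAC.exists_evalEval_eq_zero (hF : IsPAC F) {G : F[X][Y]}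
    (hG : Irreducible (G.map (mapRingHom (algebraMap F (AlgebraicClosure F))))) :
    ∃ x y : F, G.evalEval x y = 0 := by
  let φ := algebraMap F (AlgebraicClosure F)
  let g := equivMvPolynomial F G
  have hgmap : Irreducible (MvPolynomial.map φ g) := by
    rw [map_equivMvPolynomial]
    exact (MulEquiv.irreducible_iff (equivMvPolynomial (AlgebraicClosure F))).2 hG
  have := isLocalHom_mvPolynomial_map (σ := Fin 2) φ φ.injective
  have hg : Irreducible g := Irreducible.of_map (f := MvPolynomial.map φ) hgmap
  have hmap : (Ideal.span {g}).map (MvPolynomial.map φ) = Ideal.span {MvPolynomial.map φ g} := by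
    rw [Ideal.map_span, Set.image_singleton]
  obtain ⟨v, hv⟩ := hF 2 (Ideal.span {g})
    ((Ideal.span_singleton_prime hg.ne_zero).2 hg.prime)
    (hmap ▸ (Ideal.span_singleton_prime hgmap.ne_zero).2 hgmap.prime)
  refine ⟨v 0, v 1, ?_⟩
  rw [← eval_equivMvPolynomial]
  exact hv g (Ideal.mem_span_singleton_self g)

-- Over a finite field with `q` elements, the curve `(x ^ q - x) * y = 1` has no rational point.
theorem IsPAC.infinite (hF : IsPAC F) : Infinite F := by
  by_contra hfin
  rw [not_infinite_iff_finite] at hfin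
  have := Fintype.ofFinite F
  let P : F[X] := X ^ Fintype.card F - X
  have hP : P ≠ 0 := FiniteField.X_pow_card_sub_X_ne_zero F Fintype.one_lt_card
  have hirr : Irreducible
      ((C P * X + C (-1) : F[X][Y]).map (mapRingHom (algebraMap F (AlgebraicClosure F)))) := by
    simp only [Polynomial.map_add, Polynomial.map_mul, map_C, map_X, coe_mapRingHom]
    refine irreducible_C_mul_X_add_C (Polynomial.map_ne_zero hP)
      (IsUnit.isRelPrime_right ?_)
    simp
  obtain ⟨x, y, hxy⟩ := hF.exists_evalEval_eq_zero hirr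
  simp [P, evalEval_add, evalEval_mul, evalEval_C, FiniteField.pow_card] at hxy

theorem IsPAC.eventually_mem_powDivDifferences (hF : IsPAC F) {f : F[X]} (hf : f.Monic)
    (hroot : ∀ x, ¬ f.IsRoot x) (hf' : derivative f ≠ 0) :
    ∀ᶠ c in cofinite, c ∈ powDivDifferences f := by
  let φ := algebraMap F (AlgebraicClosure F)
  have hf0 : f.coeff 0 ≠ 0 := coeff_zero_eq_eval_zero f ▸ hroot 0
  have hφf0 : (f.map φ).coeff 0 ≠ 0 := by
    rw [coeff_map]
    exact (map_ne_zero φ).2 hf0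
  have hφf' : derivative (f.map φ) ≠ 0 := by
    rw [derivative_map]
    exact Polynomial.map_ne_zero hf'
  filter_upwards [φ.injective.tendsto_cofinite.eventually
    (eventually_exists_simple_root_powDivFiber (hf.map φ) hφf0 hφf')] with c ⟨r, hr, hr'⟩
  have hirr : Irreducible ((powDivSubCurve f c).map (mapRingHom φ)) := by
    rw [map_powDivSubCurve φ hf]
    exact irreducible_powDivSubCurve hφf0 hφf' hr hr'
  obtain ⟨x, y, hxy⟩ := hF.exists_evalEval_eq_zero hirr
  rw [evalEval_powDivSubCurve] at hxy
  have hx : f.eval x ≠ 0 := hroot x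
  have hy : f.eval y ≠ 0 := hroot y
  refine ⟨_, ⟨x, isRoot_powDivFiber_div hx⟩, _, ⟨y, isRoot_powDivFiber_div hy⟩, ?_⟩
  field_simp
  linear_combination -hxy

theorem sub_eq_univ_of_mem_cofinite {G : Type*} [AddCommGroup G] [Infinite G] {A : Set G}
    (hA : A ∈ cofinite) : A - A = Set.univ := by
  refine Set.eq_univ_of_forall fun x => ?_
  have hA' : ∀ᶠ a in cofinite, x + a ∈ A := (add_right_injective x).tendsto_cofinite hA
  obtain ⟨a, ha, hxa⟩ := (Filter.Eventually.and hA hA').exists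
  exact ⟨x + a, hxa, a, ha, add_sub_cancel_right x a⟩

end PAC

section PrimeField

theorem perfectField_bot_subfield (F : Type*) [Field F] : PerfectField (⊥ : Subfield F) := by
  obtain ⟨p, hp⟩ := CharP.exists F
  rcases CharP.char_is_prime_or_zero F p with hprime | rfl
  · have : Fact p.Prime := ⟨hprime⟩
    have := Subfield.fintypeBot F p
    infer_instance
  · have := CharP.charP_to_charZero F
    infer_instance

theorem exists_intCast_mul_eq_intCast {F : Type*} [Field F] (x : (⊥ : Subfield F)) :
    ∃ a b : ℤ, (b : (⊥ : Subfield F)) ≠ 0 ∧ (b : (⊥ : Subfield F)) * x = a := by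
  obtain ⟨x, hx⟩ := x
  rw [← Subfield.closure_empty, Subfield.mem_closure_iff] at hx
  simp only [Subring.closure_empty] at hx
  obtain ⟨_, ⟨a, rfl⟩, _, ⟨b, rfl⟩, rfl⟩ := hx
  rcases eq_or_ne (b : F) 0 with hb | hb
  · exact ⟨0, 1, by simp, Subtype.ext (by simp [hb])⟩
  · exact ⟨a, b, fun h => hb (by simpa using congrArg Subtype.val h),
      Subtype.ext (by simp [mul_div_cancel₀ _ hb])⟩

theorem exists_C_mul_mem_lifts {R k : Type*} [CommRing R] [CommRing k] [NoZeroDivisors k]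
    {φ : R →+* k} (hφ : ∀ x : k, ∃ a b : R, φ b ≠ 0 ∧ φ b * x = φ a) (p : k[X]) :
    ∃ d : R, φ d ≠ 0 ∧ C (φ d) * p ∈ lifts φ := by
  induction p using Polynomial.induction_on' with
  | add p q hp hq =>
    obtain ⟨d, hd, hdp⟩ := hp
    obtain ⟨e, he, heq⟩ := hq
    refine ⟨d * e, map_mul φ d e ▸ mul_ne_zero hd he, ?_⟩
    have : C (φ (d * e)) * (p + q) = C (φ e) * (C (φ d) * p) + C (φ d) * (C (φ e) * q) := by
      rw [map_mul, C_mul]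
      ring
    rw [this]
    exact add_mem (mul_mem (C_mem_lifts φ e) hdp) (mul_mem (C_mem_lifts φ d) heq)
  | monomial n x =>
    obtain ⟨a, b, hb, hab⟩ := hφ x
    exact ⟨b, hb, by rw [C_mul_monomial, hab]; exact monomial_mem_lifts n (Set.mem_range_self a)⟩

theorem scaleRoots_mem_lifts {R k : Type*} [CommRing R] [CommRing k] {φ : R →+* k} {p : k[X]}
    (hp : p.Monic) {d : R} (hd : C (φ d) * p ∈ lifts φ) : p.scaleRoots (φ d) ∈ lifts φ := by
  rw [lifts_iff_coeff_lifts] at hd ⊢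
  intro i
  change _ ∈ φ.range
  rw [coeff_scaleRoots]
  rcases lt_trichotomy i p.natDegree with hi | rfl | hi
  · have hdi : φ d * p.coeff i ∈ φ.range := coeff_C_mul p ▸ hd i
    rw [← mul_pow_sub_one (Nat.sub_ne_zero_of_lt hi), ← mul_assoc, mul_comm (p.coeff i)]
    exact mul_mem hdi (pow_mem (φ.mem_range_self d) _)
  · rw [hp.coeff_natDegree, Nat.sub_self, pow_zero, mul_one]
    exact one_mem _
  · rw [coeff_eq_zero_of_natDegree_lt hi, zero_mul]
    exact zero_mem _

theorem derivative_scaleRoots_ne_zero {R : Type*} [CommRing R] [IsDomain R] {p : R[X]}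
    (hp : derivative p ≠ 0) {s : R} (hs : s ≠ 0) : derivative (p.scaleRoots s) ≠ 0 := by
  obtain ⟨i, hi⟩ := not_forall.1 (Polynomial.ext_iff.not.1 hp)
  rw [coeff_derivative, coeff_zero, ← ne_eq, mul_ne_zero_iff] at hi
  intro h
  have hi' : (derivative (p.scaleRoots s)).coeff i = 0 := by rw [h, coeff_zero]
  rw [coeff_derivative, coeff_scaleRoots] at hi'
  exact mul_ne_zero (mul_ne_zero hi.1 (pow_ne_zero _ hs)) hi.2 hi'

theorem exists_monic_irreducible_forall_aeval_ne_zero {k F : Type*} [Field k] [Field F]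
    [Algebra k F] (h : ¬ IsAlgClosed (algebraicClosure k F)) :
    ∃ p : k[X], p.Monic ∧ Irreducible p ∧ ∀ x : F, aeval x p ≠ 0 := by
  by_contra! hroot
  have : IsAlgClosure k (algebraicClosure k F) := by
    refine IsAlgClosure.of_exists_root fun p hp hirr => ?_
    obtain ⟨x, hx⟩ := hroot p hp hirr
    refine ⟨⟨x, mem_algebraicClosure_iff.2 ⟨p, hp.ne_zero, hx⟩⟩, ?_⟩
    exact (algebraMap (algebraicClosure k F) F).injective
      (by rw [← aeval_algebraMap_apply, map_zero]; exact hx)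
  exact h (IsAlgClosure.isAlgClosed k)

theorem exists_int_polynomial_forall_not_isRoot {F : Type*} [Field F]
    (h : ¬ IsAlgClosed (algebraicClosure (⊥ : Subfield F) F)) :
    ∃ f : ℤ[X], f.Monic ∧ (∀ x : F, ¬ (f.map (Int.castRingHom F)).IsRoot x) ∧
      derivative (f.map (Int.castRingHom F)) ≠ 0 := by
  obtain ⟨p, hp, hirr, hroot⟩ := exists_monic_irreducible_forall_aeval_ne_zero h
  have := perfectField_bot_subfield F
  have hp' : derivative p ≠ 0 :=
    (separable_iff_derivative_ne_zero hirr).1 (PerfectField.separable_of_irreducible hirr)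
  obtain ⟨d, hd, hdp⟩ := exists_C_mul_mem_lifts (φ := Int.castRingHom (⊥ : Subfield F))
    exists_intCast_mul_eq_intCast p
  obtain ⟨f, hfp, -, hf⟩ :=
    lifts_and_natDegree_eq_and_monic (scaleRoots_mem_lifts hp hdp) ((monic_scaleRoots_iff _).2 hp)
  let ι := algebraMap (⊥ : Subfield F) F
  have hmap : f.map (Int.castRingHom F) = (p.scaleRoots (d : (⊥ : Subfield F))).map ι := by
    rw [← eq_intCast (Int.castRingHom (⊥ : Subfield F)), ← hfp, Polynomial.map_map]
    congr 1
  have hd' : ι d ≠ 0 := (map_ne_zero ι).2 hd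
  refine ⟨f, hf, fun x hx => hroot (x / ι d) ?_, ?_⟩
  · rw [hmap, IsRoot, eval_map] at hx
    have hscale := scaleRoots_eval₂_mul (p := p) ι (x / ι d) (d : (⊥ : Subfield F))
    rw [mul_div_cancel₀ _ hd', hx] at hscale
    exact (mul_eq_zero.1 hscale.symm).resolve_left (pow_ne_zero _ hd')
  · rw [hmap, derivative_map]
    exact Polynomial.map_ne_zero (derivative_scaleRoots_ne_zero hp' hd)

end PrimeField

section LocalRing

open IsLocalRing

variable {R : Type*} [CommRing R] [IsLocalRing R] {f : R[X]}

theorem isUnit_eval_of_forall_not_isRoot_map_residue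
    (hroot : ∀ x, ¬ (f.map (residue R)).IsRoot x) (z : R) : IsUnit (f.eval z) := by
  rw [← residue_ne_zero_iff_isUnit, ← eval_map_apply]
  exact hroot _

theorem powDivValues_map_residue_subset (hf : f.Monic)
    (hroot : ∀ x, ¬ (f.map (residue R)).IsRoot x) :
    powDivValues (f.map (residue R)) ⊆ residue R '' powDivValues f := by
  rintro c ⟨x, hx⟩
  obtain ⟨z, rfl⟩ := residue_surjective x
  obtain ⟨u, hu⟩ := isUnit_eval_of_forall_not_isRoot_map_residue hroot z
  rw [isRoot_powDivFiber, hf.natDegree_map, eval_map_apply, ← hu] at hx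
  refine ⟨z ^ f.natDegree * ↑u⁻¹, ⟨z, ?_⟩, ?_⟩
  · rw [isRoot_powDivFiber, ← hu, Units.inv_mul_cancel_right]
  · rw [map_mul, map_pow, hx, mul_assoc, ← map_mul, Units.mul_inv, map_one, mul_one]

theorem powDivDifferences_map_residue_subset (hf : f.Monic)
    (hroot : ∀ x, ¬ (f.map (residue R)).IsRoot x) :
    powDivDifferences (f.map (residue R)) ⊆ residue R '' powDivDifferences f := by
  have hvalues := powDivValues_map_residue_subset hf hroot
  rw [powDivDifferences, powDivDifferences, Set.image_sub]
  exact Set.sub_subset_sub hvalues hvalues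

theorem sub_eq_univ_of_image_residue {A B : Set R} (hA : residue R '' A = Set.univ)
    (hB : (maximalIdeal R : Set R) ⊆ B) : A - B = Set.univ := by
  refine Set.eq_univ_of_forall fun x => ?_
  obtain ⟨a, ha, hax⟩ := Set.eq_univ_iff_forall.1 hA (residue R x)
  exact ⟨a, ha, a - x, hB (Ideal.Quotient.eq.1 hax), sub_sub_cancel a x⟩

end LocalRing

section Henselian

open IsLocalRing

variable {R : Type*} [CommRing R] [HenselianLocalRing R] {f : R[X]}

theorem exists_isRoot_of_isUnit_leadingCoeff {p : R[X]} (hp : IsUnit p.leadingCoeff)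
    {a : ResidueField R} (ha : (p.map (residue R)).IsRoot a)
    (ha' : (derivative (p.map (residue R))).eval a ≠ 0) : ∃ x, p.IsRoot x := by
  let u : R := ↑hp.unit⁻¹
  let q : R[X] := C u * p
  have hq : q.Monic := by
    have hsmul := monic_of_isUnit_leadingCoeff_inv_smul hp
    rwa [Units.smul_def, smul_eq_C_mul] at hsmul
  have hu : residue R u ≠ 0 := (residue_ne_zero_iff_isUnit _).2 hp.unit⁻¹.isUnit
  rw [IsRoot, eval_map] at ha
  rw [derivative_map, eval_map] at ha'
  have hqa : aeval a q = 0 := by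
    simp only [q, aeval_def, eval₂_mul]
    exact mul_eq_zero_of_right _ ha
  have hqa' : aeval a (derivative q) ≠ 0 := by
    simp only [q, aeval_def, derivative_C_mul, eval₂_mul, eval₂_C]
    exact mul_ne_zero hu ha'
  have hensel := ((HenselianLocalRing.TFAE R).out 0 1 rfl rfl).1 ‹_›
  obtain ⟨x, hx, -⟩ := hensel q hq a hqa hqa'
  refine ⟨x, ?_⟩
  rw [IsRoot, eval_mul, eval_C] at hx
  exact (Units.mul_right_eq_zero hp.unit⁻¹).1 hx

theorem mem_powDivValues_of_residue (hf : f.Monic) {c : R} (hc : residue R c ≠ 1)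
    {r : ResidueField R}
    (hr : (powDivFiber (f.map (residue R)) (residue R c)).IsRoot r)
    (hr' : (derivative (powDivFiber (f.map (residue R)) (residue R c))).eval r ≠ 0) :
    c ∈ powDivValues f := by
  rw [← map_powDivFiber hf] at hr hr'
  refine exists_isRoot_of_isUnit_leadingCoeff ?_ hr hr'
  rw [leadingCoeff_powDivFiber hf (ne_of_apply_ne (residue R) (by rwa [map_one])),
    ← residue_ne_zero_iff_isUnit, map_sub, map_one]
  exact sub_ne_zero.2 hc.symm

theorem maximalIdeal_subset_powDivDifferences [Infinite (ResidueField R)] (hf : f.Monic)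
    (hf0 : (f.map (residue R)).coeff 0 ≠ 0)
    (hf' : derivative (f.map (residue R)) ≠ 0) :
    (maximalIdeal R : Set R) ⊆ powDivDifferences f := by
  intro t ht
  obtain ⟨c, r, hc, hr, hr'⟩ := exists_simple_root_powDivFiber hf0 hf'
  obtain ⟨c, rfl⟩ := residue_surjective c
  have hct : residue R (c + t) = residue R c := by
    rw [map_add, (residue_eq_zero_iff t).2 ht, add_zero]
  refine ⟨c + t, ?_, c, mem_powDivValues_of_residue hf hc hr hr', add_sub_cancel_left c t⟩
  exact mem_powDivValues_of_residue hf (hct ▸ hc) (hct ▸ hr) (hct ▸ hr')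

theorem powDivDifferences_sub_sub_eq_univ (hR : IsPAC (ResidueField R)) (hf : f.Monic)
    (hroot : ∀ x, ¬ (f.map (residue R)).IsRoot x)
    (hf' : derivative (f.map (residue R)) ≠ 0) :
    powDivDifferences f - powDivDifferences f - powDivDifferences f = Set.univ := by
  have := hR.infinite
  have huniv := sub_eq_univ_of_mem_cofinite
    (hR.eventually_mem_powDivDifferences (hf.map _) hroot hf')
  have hdiff := powDivDifferences_map_residue_subset hf hroot
  refine sub_eq_univ_of_image_residue ?_ (maximalIdeal_subset_powDivDifferences hf
    (coeff_zero_eq_eval_zero (f.map (residue R)) ▸ hroot 0) hf')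
  rw [Set.image_sub, ← Set.univ_subset_iff, ← huniv]
  exact Set.sub_subset_sub hdiff hdiff

end Henselian

section Valuation

open IsLocalRing

theorem isIntegral_of_isUnit_leadingCoeff {R A : Type*} [CommRing R] [CommRing A] [Algebra R A]
    {p : R[X]} (hp : IsUnit p.leadingCoeff) {x : A} (hx : aeval x p = 0) : IsIntegral R x :=
  ⟨hp.unit⁻¹ • p, monic_of_isUnit_leadingCoeff_inv_smul hp, by
    rw [← aeval_def, Units.smul_def, map_smul, hx, smul_zero]⟩

variable {O K : Type*} [CommRing O] [IsDomain O] [ValuationRing O] [Field K] [Algebra O K]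
  [IsFractionRing O K]

theorem powDivValues_map_subset_range {f : O[X]} (hf : f.Monic)
    (hroot : ∀ x, ¬ (f.map (residue O)).IsRoot x) :
    powDivValues (f.map (algebraMap O K)) ⊆ (algebraMap O K).range := by
  rintro c ⟨z, hz⟩
  rw [isRoot_powDivFiber, hf.natDegree_map, eval_map_algebraMap] at hz
  rcases eq_or_ne c 0 with rfl | hc
  · exact ⟨0, map_zero _⟩
  rcases ValuationRing.isInteger_or_isInteger O c with hcO | ⟨t, ht⟩
  · exact hcO
  by_cases htu : IsUnit t
  · obtain ⟨u, rfl⟩ := htu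
    exact ⟨↑u⁻¹, by rw [map_units_inv, ht, inv_inv]⟩
  have hzt : aeval z f = algebraMap O K t * z ^ f.natDegree := by
    rw [hz, ht, inv_mul_cancel_left₀ hc]
  have hzint : IsIntegral O z := by
    refine isIntegral_of_isUnit_leadingCoeff (p := f - C t * X ^ f.natDegree) ?_ ?_
    · have ht1 : t ≠ 1 := by
        rintro rfl
        exact htu isUnit_one
      rw [leadingCoeff_sub_C_mul hf (monic_X_pow _) (natDegree_X_pow _) ht1]
      exact isUnit_one_sub_self_of_mem_nonunits t htu
    · rw [map_sub, map_mul, aeval_C, map_pow, aeval_X, hzt, sub_self]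
  obtain ⟨w, rfl⟩ := IsIntegrallyClosed.isIntegral_iff.1 hzint
  rw [aeval_algebraMap_apply, ← map_pow, ← map_mul,
    (IsFractionRing.injective O K).eq_iff] at hzt
  have hunit := isUnit_eval_of_forall_not_isRoot_map_residue hroot w
  rw [← coe_aeval_eq_eval, hzt] at hunit
  exact (htu (isUnit_of_mul_isUnit_left hunit)).elim

theorem powDivDifferences_map_sub_sub_eq_range [HenselianLocalRing O]
    (hO : IsPAC (ResidueField O)) {f : O[X]} (hf : f.Monic)
    (hroot : ∀ x, ¬ (f.map (residue O)).IsRoot x) (hf' : derivative (f.map (residue O)) ≠ 0) :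
    powDivDifferences (f.map (algebraMap O K)) - powDivDifferences (f.map (algebraMap O K)) -
      powDivDifferences (f.map (algebraMap O K)) = (algebraMap O K).range := by
  have sub_subset_range {A B : Set K} (hA : A ⊆ (algebraMap O K).range)
      (hB : B ⊆ (algebraMap O K).range) : A - B ⊆ (algebraMap O K).range :=
    Set.sub_subset_iff.2 fun _ ha _ hb => sub_mem (hA ha) (hB hb)
  have hvalues := powDivValues_map_subset_range (K := K) hf hroot
  have hdiff := sub_subset_range hvalues hvalues
  refine (sub_subset_range (sub_subset_range hdiff hdiff) hdiff).antisymm ?_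
  have himage : algebraMap O K '' powDivValues f ⊆ powDivValues (f.map (algebraMap O K)) :=
    Set.image_subset_iff.2 fun _ => map_mem_powDivValues hf _
  rw [RingHom.coe_range, ← Set.image_univ, ← powDivDifferences_sub_sub_eq_univ hO hf hroot hf']
  simp only [powDivDifferences, Set.image_sub]
  gcongr

end Valuation

/-- If `K` is a henselian valued field with valuation ring `O` whose
residue field `F` is pseudo-algebraically closed and the relative algebraic closure of
the prime field in `F` is not algebraically closed, then `O` is defined in `K` by a
parameter-free existential formula in the language of rings. -/
theorem statement15 (K : Type*) [Field K] (O : ValuationSubring K) [HenselianLocalRing O]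
    (hPAC : IsPAC (IsLocalRing.ResidueField O))
    (halg : ¬ IsAlgClosed (algebraicClosure (⊥ : Subfield (IsLocalRing.ResidueField O))
      (IsLocalRing.ResidueField O))) :
    ∃ (n : ℕ) (ψ : Language.ring.BoundedFormula (Fin 1) n), ψ.IsQF ∧
      ∀ x : K, ψ.exs.Realize (fun _ => x) ↔ x ∈ O := by
  obtain ⟨f, hf, hroot, hf'⟩ := exists_int_polynomial_forall_not_isRoot halg
  let g := f.map (Int.castRingHom O)
  have hresidue : g.map (IsLocalRing.residue O) = f.map (Int.castRingHom _) := by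
    rw [Polynomial.map_map, RingHom.eq_intCast' ((IsLocalRing.residue O).comp _)]
  have hgK : g.map (algebraMap O K) = f.map (Int.castRingHom K) := by
    rw [Polynomial.map_map, RingHom.eq_intCast' ((algebraMap O K).comp _)]
  have hO := powDivDifferences_map_sub_sub_eq_range (K := K) hPAC (hf.map _)
    (hresidue ▸ hroot) (hresidue ▸ hf')
  have hT : IsDiophantine (powDivDifferences (f.map (Int.castRingHom K))) :=
    (isDiophantine_powDivValues hf).sub (isDiophantine_powDivValues hf)
  obtain ⟨n, ψ, hψ, hiff⟩ := ((hT.sub hT).sub hT).exists_isQF_realize_exs_iff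
  refine ⟨n, ψ, hψ, fun x => (hiff x).trans ?_⟩
  rw [← hgK, hO]
  exact ⟨by rintro ⟨y, rfl⟩; exact y.2, fun hx => ⟨⟨x, hx⟩, rfl⟩⟩
end
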